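/- arXiv:2508.21744 — 3 statements merged into one kernel-verified Lean document; each statement's English description precedes it below -/
import Mathlib

section
/- Let n > 2, let b ∈ ℝ^n with 0 < ‖b‖ < 1, write y_⊥ = y − (⟨b,y⟩/‖b‖²) b, and let F(y) = ‖y‖ − ‖b‖ ‖y_⊥‖ (the b-space norm F_b^−). Then F is not an almost Minkowski norm: there exist y ∈ ℝ^n ∖ ℝb and v ∈ ℝ^n such that ½ D²(F²)(y)(v,v) < 0. -/
open scoped RealInnerProductSpace

/-!
Since `n > 2`, there are unit vectors `e`, `w` such that `b`, `e`, `w` are pairwise orthogonal.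
Put `B = ‖b‖`, `y = b + B² e` and `v = w`; then `y_⊥ = B² e` and, with `R² = B² + B⁴ = ‖y‖²`,
`F²(y + t w) = (√(R² + t²) - B √(B⁴ + t²))²`.
The second derivative of this at `t = 0` is `2 (R - B³) (1/R - 1/B)`. The first factor is
positive as `R > B > B³`, and the second is negative as `R > B`. The function is smooth at `y`
because neither `y` nor `y_⊥` vanishes, so half of this second derivative is the value at `(w, w)`
of the fundamental tensor at `y` (`iteratedFDeriv_two_eq_of_line`).
-/

/-- The diagonal value `D²f(y)(v,v)` of a `C²` function is the second derivative at `0` of its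
restriction to the line `t ↦ y + t v`. -/
lemma iteratedFDeriv_two_eq_of_line {E : Type*} [NormedAddCommGroup E] [NormedSpace ℝ E]
    {f : E → ℝ} {y v : E} (hf : ContDiffAt ℝ 2 f y) {g' : ℝ → ℝ} {c : ℝ}
    (hg : ∀ t, HasDerivAt (fun t : ℝ => f (y + t • v)) (g' t) t) (hc : HasDerivAt g' c 0) :
    iteratedFDeriv ℝ 2 f y ![v, v] = c := by
  rw [iteratedFDeriv_two_apply]
  have hline : ∀ t : ℝ, HasDerivAt (fun t : ℝ => y + t • v) v t := fun t => by
    simpa using ((hasDerivAt_id t).smul_const v).const_add y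
  have hd : DifferentiableAt ℝ (fderiv ℝ f) (y + (0 : ℝ) • v) := by
    simpa using (hf.fderiv_right (m := 1) (by norm_num)).differentiableAt (by norm_num)
  have h1 : HasDerivAt (fun t : ℝ => fderiv ℝ f (y + t • v) v)
      (fderiv ℝ (fderiv ℝ f) (y + (0 : ℝ) • v) v v) 0 := by
    have := hd.hasFDerivAt.comp_hasDerivAt (0 : ℝ) (hline 0)
    simpa using this.clm_apply (hasDerivAt_const (0 : ℝ) v)
  have hev : ∀ᶠ t : ℝ in nhds 0, DifferentiableAt ℝ f (y + t • v) := by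
    have h := hf.eventually (by simp)
    have ht : Filter.Tendsto (fun t : ℝ => y + t • v) (nhds 0) (nhds y) := by
      simpa using (hline 0).continuousAt.tendsto
    filter_upwards [ht.eventually h] with t h
    exact h.differentiableAt (by norm_num)
  have heq : g' =ᶠ[nhds 0] fun t : ℝ => fderiv ℝ f (y + t • v) v := by
    filter_upwards [hev] with t h
    exact (hg t).unique (h.hasFDerivAt.comp_hasDerivAt t (hline t))
  have := (h1.congr_of_eventuallyEq heq).unique hc
  simpa using this

/-- In dimension greater than two, a nonzero vector is orthogonal to two orthonormal vectors. -/
lemma exists_two_orthonormal {n : ℕ} (hn : 2 < n) (b : EuclideanSpace ℝ (Fin n)) (hb : 0 < ‖b‖) :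
    ∃ e w : EuclideanSpace ℝ (Fin n), ‖e‖ = 1 ∧ ‖w‖ = 1 ∧ ⟪b, e⟫ = 0 ∧ ⟪b, w⟫ = 0 ∧
      ⟪e, w⟫ = 0 := by
  let i0 : Fin n := ⟨0, by omega⟩
  let i1 : Fin n := ⟨1, by omega⟩
  let i2 : Fin n := ⟨2, by omega⟩
  have hv : Orthonormal ℝ (({i0} : Set (Fin n)).domRestrict
      (fun _ : Fin n => (‖b‖⁻¹ • b : EuclideanSpace ℝ (Fin n)))) := by
    constructor
    · intro i
      change ‖‖b‖⁻¹ • b‖ = 1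
      simp [norm_smul, hb.ne']
    · intro i j hij
      exact absurd (Subsingleton.elim i j) hij
  obtain ⟨u, hu⟩ := hv.exists_orthonormalBasis_extension_of_card_eq (by simp)
  have h0 : b = ‖b‖ • u i0 := by
    rw [hu i0 rfl, smul_smul, mul_inv_cancel₀ hb.ne', one_smul]
  have ho := u.orthonormal
  have h01 : ⟪u i0, u i1⟫ = 0 := ho.2 (by simp [i0, i1])
  have h02 : ⟪u i0, u i2⟫ = 0 := ho.2 (by simp [i0, i2])
  have h12 : ⟪u i1, u i2⟫ = 0 := ho.2 (by simp [i1, i2])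
  refine ⟨u i1, u i2, ho.1 _, ho.1 _, ?_, ?_, h12⟩
  · rw [h0, real_inner_smul_left, h01, mul_zero]
  · rw [h0, real_inner_smul_left, h02, mul_zero]

lemma hasDerivAt_sqrt_add_sq {a : ℝ} (ha : 0 < a) (t : ℝ) :
    HasDerivAt (fun t : ℝ => √(a + t ^ 2)) (t / √(a + t ^ 2)) t := by
  have h : HasDerivAt (fun t : ℝ => a + t ^ 2) (2 * t) t := by
    simpa using (hasDerivAt_pow 2 t).const_add a
  convert h.sqrt (by positivity) using 1
  field_simp

/-- For `n > 2` and `b ∈ ℝⁿ` with `0 < ‖b‖ < 1`, the b-space norm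
`F(y) = ‖y‖ - ‖b‖‖y_⊥‖` (with `y_⊥ = y - (⟪b,y⟫/‖b‖²) b`) is not an almost Minkowski
norm: its fundamental tensor fails to be positive definite at some point off the line ℝb. -/
theorem stmt3 {n : ℕ} (hn : 2 < n)
    (b : EuclideanSpace ℝ (Fin n)) (hb0 : 0 < ‖b‖) (hb1 : ‖b‖ < 1) :
    ∃ y : EuclideanSpace ℝ (Fin n), y ∉ Submodule.span ℝ ({b} : Set (EuclideanSpace ℝ (Fin n))) ∧
      ∃ v : EuclideanSpace ℝ (Fin n),
        (1/2 : ℝ) * iteratedFDeriv ℝ 2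
          (fun z => (‖z‖ - ‖b‖ * ‖z - (⟪b, z⟫ / ‖b‖^2) • b‖)^2) y ![v, v] < 0 := by
  obtain ⟨e, w, he, hw, hbe, hbw, hew⟩ := exists_two_orthonormal hn b hb0
  set B := ‖b‖ with hB
  have hbb : ⟪b, b⟫ = B ^ 2 := real_inner_self_eq_norm_sq b
  have hee : ⟪e, e⟫ = 1 := by rw [real_inner_self_eq_norm_sq, he, one_pow]
  have hww : ⟪w, w⟫ = 1 := by rw [real_inner_self_eq_norm_sq, hw, one_pow]
  have heb : ⟪e, b⟫ = 0 := by rw [real_inner_comm, hbe]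
  have hwb : ⟪w, b⟫ = 0 := by rw [real_inner_comm, hbw]
  have hwe : ⟪w, e⟫ = 0 := by rw [real_inner_comm, hew]
  have hperp : ∀ t : ℝ, (b + B ^ 2 • e + t • w) -
      (⟪b, b + B ^ 2 • e + t • w⟫ / B ^ 2) • b = B ^ 2 • e + t • w := fun t => by
    simp only [inner_add_right, real_inner_smul_right, hbb, hbe, hbw]
    rw [mul_zero, mul_zero, add_zero, add_zero, div_self (by positivity), one_smul]
    abel
  have hn1 : ∀ t : ℝ, ‖b + B ^ 2 • e + t • w‖ = √(B ^ 2 + B ^ 4 + t ^ 2) := fun t => by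
    rw [← Real.sqrt_sq (norm_nonneg (b + B ^ 2 • e + t • w)), ← real_inner_self_eq_norm_sq]
    congr 1
    simp only [inner_add_right, inner_add_left, real_inner_smul_right, real_inner_smul_left,
      hbb, hbe, hbw, hee, hww, heb, hwb, hwe, hew]
    ring
  have hn2 : ∀ t : ℝ, ‖B ^ 2 • e + t • w‖ = √(B ^ 4 + t ^ 2) := fun t => by
    rw [← Real.sqrt_sq (norm_nonneg (B ^ 2 • e + t • w)), ← real_inner_self_eq_norm_sq]
    congr 1
    simp only [inner_add_right, inner_add_left, real_inner_smul_right, real_inner_smul_left,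
      hee, hww, hwe, hew]
    ring
  have hperp0 := hperp 0
  have hn10 := hn1 0
  have hn20 := hn2 0
  simp only [zero_smul, add_zero] at hperp0 hn10 hn20
  refine ⟨b + B ^ 2 • e, ?_, w, ?_⟩
  · intro h
    obtain ⟨c, hc⟩ := Submodule.mem_span_singleton.1 h
    have h := congrArg (fun z => ⟪e, z⟫) hc
    simp only [inner_add_right, real_inner_smul_right, heb, hee] at h
    have : 0 < B ^ 2 := by positivity
    linarith
  have hsm : ContDiffAt ℝ 2 (fun z : EuclideanSpace ℝ (Fin n) =>
      (‖z‖ - B * ‖z - (⟪b, z⟫ / B ^ 2) • b‖) ^ 2) (b + B ^ 2 • e) := by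
    have h1 : b + B ^ 2 • e ≠ 0 := by
      rw [← norm_pos_iff, hn10]
      positivity
    have h2 : b + B ^ 2 • e - (⟪b, b + B ^ 2 • e⟫ / B ^ 2) • b ≠ 0 := by
      rw [← norm_pos_iff, hperp0, hn20]
      positivity
    have h3 : ContDiffAt ℝ 2 (fun z : EuclideanSpace ℝ (Fin n) =>
        z - (⟪b, z⟫ / B ^ 2) • b) (b + B ^ 2 • e) := by
      exact contDiffAt_id.sub
        (((contDiffAt_const.inner ℝ contDiffAt_id).div_const _).smul contDiffAt_const)
    exact ((contDiffAt_id.norm ℝ h1).sub (contDiffAt_const.mul (h3.norm ℝ h2))).pow 2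
  have hd1 := hasDerivAt_sqrt_add_sq (a := B ^ 2 + B ^ 4) (by positivity)
  have hd2 := hasDerivAt_sqrt_add_sq (a := B ^ 4) (by positivity)
  -- The first derivative along the line is `t * h t`; its derivative at `0` is just `h 0`.
  let h : ℝ → ℝ := fun t => 2 * (√(B ^ 2 + B ^ 4 + t ^ 2) - B * √(B ^ 4 + t ^ 2)) *
    ((√(B ^ 2 + B ^ 4 + t ^ 2))⁻¹ - B * (√(B ^ 4 + t ^ 2))⁻¹)
  have hh : DifferentiableAt ℝ h 0 := by
    have e1 := (hd1 0).differentiableAt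
    have e2 := (hd2 0).differentiableAt
    have i1 := e1.inv (by positivity)
    have i2 := e2.inv (by positivity)
    exact ((e1.sub (e2.const_mul B)).const_mul 2).mul (i1.sub (i2.const_mul B))
  rw [iteratedFDeriv_two_eq_of_line hsm (g' := fun t => t * h t) (c := h 0)]
  · have hs4 : √(B ^ 4) = B ^ 2 := by
      rw [show B ^ 4 = (B ^ 2) ^ 2 by ring, Real.sqrt_sq (by positivity)]
    have hR : B < √(B ^ 2 + B ^ 4) := by
      apply Real.lt_sqrt_of_sq_lt
      have : 0 < B ^ 4 := by positivity
      linarith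
    have hB3 : B * B ^ 2 < B := by
      have : B ^ 2 < 1 := by nlinarith
      nlinarith
    have hi : (√(B ^ 2 + B ^ 4))⁻¹ < B⁻¹ := inv_strictAnti₀ hb0 hR
    have hB1 : B * (B ^ 2)⁻¹ = B⁻¹ := by field_simp
    simp only [h, ne_eq, OfNat.ofNat_ne_zero, not_false_eq_true, zero_pow, add_zero, hs4, hB1]
    nlinarith [mul_pos (sub_pos.2 (hB3.trans hR)) (sub_pos.2 hi)]
  · intro t
    simp only [hperp, hn1, hn2]
    refine HasDerivAt.congr_deriv (((hd1 t).sub ((hd2 t).const_mul B)).pow 2) ?_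
    simp only [h, Pi.sub_apply]
    push_cast
    ring
  · refine HasDerivAt.congr_deriv ((hasDerivAt_id (0 : ℝ)).mul hh.hasDerivAt) ?_
    simp
end

section
/- Let F = ρ + Δ be a bipartite Finsler norm on ℝ^n and let y ∈ ℝ^n ∖ S be a point at which the matrix (g_{jk}(y)) is invertible. Then for every index j: 2(F − Δ) I_j + κ ((Δ/F) p_j − Δ_j) + (2F²/Δ) g^{kl} Δ_k Δ_{lj} = 0, where κ = n + 1 − (F²/Δ) g^{kl} Δ_{kl} and repeated indices k, l are summed. -/
/-!
Write `m = Δ p - F ∇Δ`, so that `(Δ/F) p_j - Δ_j = m_j / F`. Both `ρ` and `Δ` are signed square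
roots of quadratic forms; differentiating `f² = ⟪A z, z⟫` three times (`sqrt_relations`) gives
`f f_{jkl} = -(f_l f_{jk} + f_k f_{jl} + f_j f_{kl})`. Substituting this into the Leibniz expansion
of the third derivatives of `F²` (`pd_sq`) turns the Cartan torsion into the cyclic sum

  `2 ρ F C_{jkl} = ∑_{cyc} m_l ((F²/Δ) Δ_{jk} - g_{jk} + p_j p_k)`.

By homogeneity `g_{jk} y^k = F p_j`, that is `g^{jk} p_k = y^j / F`, while `m` and the Hessian of
`Δ` annihilate `y`. Hence contracting with `g^{kl}` (`contraction`) leaves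
`2 ρ F I_j = -κ m_j - (2F³/Δ) g^{kl} Δ_k Δ_{lj}`, which is the claim multiplied by `F`. The
eigenvalue bound enters through `F(y) ≠ 0` (`quad_lt`).
-/

open scoped RealInnerProductSpace

/-- Partial derivative in the `j`-th standard coordinate direction. -/
noncomputable def pd {n : ℕ} (f : EuclideanSpace ℝ (Fin n) → ℝ) (j : Fin n) :
    EuclideanSpace ℝ (Fin n) → ℝ :=
  fun y => fderiv ℝ f y (EuclideanSpace.single j (1 : ℝ))

/-! ### Calculus of partial derivatives on an open set -/

open Topology ContDiff in
lemma pd_congr {n : ℕ} {f h : EuclideanSpace ℝ (Fin n) → ℝ} {U : Set (EuclideanSpace ℝ (Fin n))}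
    (hU : IsOpen U) (e : ∀ z ∈ U, f z = h z) (j : Fin n) : ∀ z ∈ U, pd f j z = pd h j z := by
  intro z hz
  have : f =ᶠ[𝓝 z] h := by
    filter_upwards [hU.mem_nhds hz] with w hw using e w hw
  simp only [pd, this.fderiv_eq]

open ContDiff in
lemma pd_smooth {n : ℕ} {f : EuclideanSpace ℝ (Fin n) → ℝ} {U : Set (EuclideanSpace ℝ (Fin n))}
    (hf : ∀ z ∈ U, ContDiffAt ℝ ∞ f z) (j : Fin n) : ∀ z ∈ U, ContDiffAt ℝ ∞ (pd f j) z := by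
  intro z hz
  exact ((hf z hz).fderiv_right (m := ∞) (by simp)).clm_apply contDiffAt_const

open ContDiff in
lemma diffAt_of_smooth {n : ℕ} {f : EuclideanSpace ℝ (Fin n) → ℝ} {z : EuclideanSpace ℝ (Fin n)}
    (hf : ContDiffAt ℝ ∞ f z) : DifferentiableAt ℝ f z := hf.differentiableAt (by simp)

lemma pd_add {n : ℕ} {f h : EuclideanSpace ℝ (Fin n) → ℝ} {z : EuclideanSpace ℝ (Fin n)}
    (hf : DifferentiableAt ℝ f z) (hh : DifferentiableAt ℝ h z) (j : Fin n) :
    pd (fun w => f w + h w) j z = pd f j z + pd h j z := by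
  simp only [pd, fderiv_fun_add hf hh, add_apply]

lemma pd_mul {n : ℕ} {f h : EuclideanSpace ℝ (Fin n) → ℝ} {z : EuclideanSpace ℝ (Fin n)}
    (hf : DifferentiableAt ℝ f z) (hh : DifferentiableAt ℝ h z) (j : Fin n) :
    pd (fun w => f w * h w) j z = pd f j z * h z + f z * pd h j z := by
  simp only [pd, fderiv_fun_mul hf hh, add_apply,
    smul_apply, smul_eq_mul]
  ring

lemma pd_const_mul {n : ℕ} {f : EuclideanSpace ℝ (Fin n) → ℝ} {z : EuclideanSpace ℝ (Fin n)}
    (c : ℝ) (hf : DifferentiableAt ℝ f z) (j : Fin n) :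
    pd (fun w => c * f w) j z = c * pd f j z := by
  simp only [pd, fderiv_const_mul hf, smul_apply, smul_eq_mul]

open ContDiff in
/-- Leibniz rule for the partial derivatives of `f²` up to order three. -/
lemma pd_sq {n : ℕ} {f : EuclideanSpace ℝ (Fin n) → ℝ} {U : Set (EuclideanSpace ℝ (Fin n))}
    (hU : IsOpen U) (hf : ∀ z ∈ U, ContDiffAt ℝ ∞ f z) (j k l : Fin n) :
    ∀ z ∈ U, pd (fun z => (f z)^2) j z = 2 * (f z * pd f j z) ∧
      pd (pd (fun z => (f z)^2) j) k z = 2 * (pd f k z * pd f j z + f z * pd (pd f j) k z) ∧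
      pd (pd (pd (fun z => (f z)^2) j) k) l z =
        2 * (pd (pd f k) l z * pd f j z + pd f k z * pd (pd f j) l z
          + (pd f l z * pd (pd f j) k z + f z * pd (pd (pd f j) k) l z)) := by
  have d0 : ∀ z ∈ U, DifferentiableAt ℝ f z := fun z hz => diffAt_of_smooth (hf z hz)
  have d1 : ∀ i, ∀ z ∈ U, DifferentiableAt ℝ (pd f i) z :=
    fun i z hz => diffAt_of_smooth (pd_smooth hf i z hz)
  have d2 : ∀ i i', ∀ z ∈ U, DifferentiableAt ℝ (pd (pd f i) i') z :=
    fun i i' z hz => diffAt_of_smooth (pd_smooth (pd_smooth hf i) i' z hz)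
  have e1 : ∀ z ∈ U, pd (fun z => (f z)^2) j z = 2 * (f z * pd f j z) := by
    intro z hz
    have : (fun z => (f z)^2) = fun z => f z * f z := by ext; ring
    rw [this, pd_mul (d0 z hz) (d0 z hz)]; ring
  have e2 : ∀ z ∈ U, pd (pd (fun z => (f z)^2) j) k z
      = 2 * (pd f k z * pd f j z + f z * pd (pd f j) k z) := by
    intro z hz
    rw [pd_congr hU e1 k z hz, pd_const_mul _ ((d0 z hz).fun_mul (d1 j z hz)),
      pd_mul (d0 z hz) (d1 j z hz)]
  intro z hz
  refine ⟨e1 z hz, e2 z hz, ?_⟩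
  rw [pd_congr hU e2 l z hz, pd_const_mul _
    (((d1 k z hz).fun_mul (d1 j z hz)).fun_add ((d0 z hz).fun_mul (d2 j k z hz))),
    pd_add ((d1 k z hz).fun_mul (d1 j z hz)) ((d0 z hz).fun_mul (d2 j k z hz)),
    pd_mul (d1 k z hz) (d1 j z hz), pd_mul (d0 z hz) (d2 j k z hz)]

/-! ### Square roots of quadratic forms -/

/-- Partial derivatives of a quadratic form; the third ones vanish. -/
lemma pd_quad {n : ℕ} (A : EuclideanSpace ℝ (Fin n) →ₗ[ℝ] EuclideanSpace ℝ (Fin n))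
    (hA : ∀ u v, ⟪A u, v⟫ = ⟪A v, u⟫) (j k l : Fin n) (z : EuclideanSpace ℝ (Fin n)) :
    pd (fun z => ⟪A z, z⟫) j z = 2 * ⟪A z, EuclideanSpace.single j (1 : ℝ)⟫ ∧
    pd (pd (fun z => ⟪A z, z⟫) j) k z =
      2 * ⟪A (EuclideanSpace.single k (1 : ℝ)), EuclideanSpace.single j (1 : ℝ)⟫ ∧
    pd (pd (pd (fun z => ⟪A z, z⟫) j) k) l z = 0 := by
  have hd : ∀ z, HasFDerivAt (fun z => A z) (LinearMap.toContinuousLinearMap A) z :=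
    fun z => (LinearMap.toContinuousLinearMap A).hasFDerivAt
  have e1 : pd (fun z => ⟪A z, z⟫) j =
      fun z => 2 * ⟪A z, EuclideanSpace.single j (1 : ℝ)⟫ := by
    ext z
    have := ((hd z).inner ℝ (hasFDerivAt_id z)).fderiv
    simp only [pd]
    simp only [id] at this
    rw [this]
    simp [fderivInnerCLM_apply]
    have := hA z (EuclideanSpace.single j (1 : ℝ))
    linarith
  have e2 : pd (pd (fun z => ⟪A z, z⟫) j) k = fun _ =>
      2 * ⟪A (EuclideanSpace.single k (1 : ℝ)), EuclideanSpace.single j (1 : ℝ)⟫ := by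
    ext z
    have h0 := (hd z).inner ℝ (hasFDerivAt_const (EuclideanSpace.single j (1 : ℝ)) z)
    rw [e1, pd_const_mul _ h0.differentiableAt]
    simp only [pd]
    rw [h0.fderiv]
    simp [fderivInnerCLM_apply]
  refine ⟨congrFun e1 z, congrFun e2 z, ?_⟩
  rw [e2]; simp [pd]

open ContDiff in
/-- Relations satisfied by a signed square root `f` of the quadratic form of a symmetric `A`:
symmetry of the Hessian, the third derivative of `f² = ⟪A z, z⟫` being zero, and Euler's relations
for `f` (homogeneous of degree one) and for its gradient (degree zero). -/
lemma sqrt_relations {n : ℕ} {f : EuclideanSpace ℝ (Fin n) → ℝ}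
    {U : Set (EuclideanSpace ℝ (Fin n))}
    (hU : IsOpen U) (hf : ∀ z ∈ U, ContDiffAt ℝ ∞ f z)
    (A : EuclideanSpace ℝ (Fin n) →ₗ[ℝ] EuclideanSpace ℝ (Fin n))
    (hA : ∀ u v, ⟪A u, v⟫ = ⟪A v, u⟫) (hq : ∀ z, f z ^ 2 = ⟪A z, z⟫)
    (y : EuclideanSpace ℝ (Fin n)) (hy : y ∈ U) (h0 : f y ≠ 0) :
    (∀ j k, pd (pd f j) k y = pd (pd f k) j y) ∧
    (∀ j k l, pd (pd f k) l y * pd f j y + pd f k y * pd (pd f j) l y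
          + (pd f l y * pd (pd f j) k y + f y * pd (pd (pd f j) k) l y) = 0) ∧
    (∑ k, pd f k y * y k = f y) ∧ (∀ j, ∑ k, pd (pd f j) k y * y k = 0) := by
  have hfun : (fun z => f z ^ 2) = fun z => ⟪A z, z⟫ := funext hq
  have r1 : ∀ j, f y * pd f j y = ⟪A y, EuclideanSpace.single j (1 : ℝ)⟫ := by
    intro j
    have h1 := (pd_sq hU hf j j j y hy).1
    rw [hfun, (pd_quad A hA j j j y).1] at h1
    linarith
  have r2 : ∀ j k, pd f k y * pd f j y + f y * pd (pd f j) k y =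
      ⟪A (EuclideanSpace.single k (1 : ℝ)), EuclideanSpace.single j (1 : ℝ)⟫ := by
    intro j k
    have h1 := (pd_sq hU hf j k j y hy).2.1
    rw [hfun, (pd_quad A hA j k j y).2.1] at h1
    linarith
  have hsum : ∀ v, ∑ k, ⟪A v, EuclideanSpace.single k (1 : ℝ)⟫ * y k = ⟪A v, y⟫ := by
    intro v
    simp [PiLp.inner_apply, mul_comm]
  have eul : ∑ k, pd f k y * y k = f y := by
    apply mul_left_cancel₀ h0
    rw [Finset.mul_sum]
    simp only [← mul_assoc, r1, hsum]
    rw [← hq]; ring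
  refine ⟨?_, ?_, eul, ?_⟩
  · intro j k
    apply mul_left_cancel₀ h0
    have := hA (EuclideanSpace.single k (1 : ℝ)) (EuclideanSpace.single j (1 : ℝ))
    linarith [r2 j k, r2 k j]
  · intro j k l
    have h1 := (pd_sq hU hf j k l y hy).2.2
    rw [hfun, (pd_quad A hA j k l y).2.2] at h1
    linarith
  · intro j
    apply mul_left_cancel₀ h0
    have h1 : ∀ k, f y * (pd (pd f j) k y * y k) =
        ⟪A (EuclideanSpace.single j (1 : ℝ)), EuclideanSpace.single k (1 : ℝ)⟫ * y k
          - pd f j y * (pd f k y * y k) := by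
      intro k
      rw [hA, ← r2 j k]; ring
    rw [Finset.mul_sum, Finset.sum_congr rfl (fun k _ => h1 k), Finset.sum_sub_distrib, hsum,
      ← Finset.mul_sum, eul, hA, ← r1]
    ring

/-! ### Contraction with the inverse fundamental tensor -/

/-- Contraction of the Cartan torsion. Here `r, d` are the values of `ρ, Δ` at `y`; `p, D` are the
gradients of `F, Δ` and `DD` is the Hessian of `Δ`; `C` is the Cartan torsion, and `hC` expresses
`2ρF C_{jkl}` as the cyclic sum of `m_l ((F²/Δ) Δ_{jk} - g_{jk} + p_j p_k)`. -/
lemma contraction {n : ℕ} (F r d : ℝ) (hd : d ≠ 0) (hF : F = r + d)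
    (hF0 : F ≠ 0) (p D m y : Fin n → ℝ) (DD : Fin n → Fin n → ℝ)
    (g : Matrix (Fin n) (Fin n) ℝ) (hdet : IsUnit g.det)
    (gsymm : ∀ k l, g k l = g l k) (DDsymm : ∀ k l, DD k l = DD l k)
    (hm : ∀ k, m k = d * p k - F * D k)
    (hp : ∑ k, p k * y k = F) (hD : ∑ k, D k * y k = d) (hDD : ∀ j, ∑ k, DD j k * y k = 0)
    (hgy : ∀ j, ∑ k, g j k * y k = F * p j)
    (C : Fin n → Fin n → Fin n → ℝ)
    (hC : ∀ j k l, 2 * r * F * C j k l =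
      m l * (F^2 / d * DD j k - g j k + p j * p k) + m k * (F^2 / d * DD j l - g j l + p j * p l)
        + m j * (F^2 / d * DD k l - g k l + p k * p l))
    (j : Fin n) :
    2 * (F - d) * (∑ k, ∑ l, g⁻¹ k l * C j k l)
      + ((n : ℝ) + 1 - (F^2 / d) * ∑ k, ∑ l, g⁻¹ k l * DD k l) * ((d / F) * p j - D j)
      + (2 * F^2 / d) * ∑ k, ∑ l, g⁻¹ k l * D k * DD l j = 0 := by
  have hgT : g.transpose = g := by ext a b; exact gsymm b a
  have hHT : ∀ k l, g⁻¹ k l = g⁻¹ l k := by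
    intro k l
    have : (g⁻¹).transpose = g⁻¹ := by rw [Matrix.transpose_nonsing_inv, hgT]
    exact congrFun (congrFun this l) k
  have hHg : g⁻¹ * g = 1 := Matrix.nonsing_inv_mul g hdet
  have hHgkl : ∀ k l, ∑ i, g⁻¹ k i * g i l = if k = l then 1 else 0 := by
    intro k l
    have := congrFun (congrFun hHg k) l
    rwa [Matrix.mul_apply, Matrix.one_apply] at this
  have hHp : ∀ k, F * ∑ l, g⁻¹ k l * p l = y k := by
    intro k
    have h1 : g.mulVec y = F • p := by
      ext i; simpa [Matrix.mulVec, dotProduct] using hgy i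
    have h2 : g⁻¹.mulVec (g.mulVec y) = y := by
      rw [Matrix.mulVec_mulVec, hHg, Matrix.one_mulVec]
    rw [h1, Matrix.mulVec_smul] at h2
    simpa [Matrix.mulVec, dotProduct] using congrFun h2 k
  have swap : ∀ u v : Fin n → ℝ, ∑ k, ∑ l, g⁻¹ k l * (u l * v k)
      = ∑ k, ∑ l, g⁻¹ k l * (u k * v l) := by
    intro u v
    rw [Finset.sum_comm]
    refine Finset.sum_congr rfl fun k _ => Finset.sum_congr rfl fun l _ => ?_
    rw [hHT]
  -- `g^{kl} p_l = y^k / F`, so pairing a covector with `p` amounts to evaluating it at `y`.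
  have hBp : ∀ u : Fin n → ℝ,
      F * ∑ k, ∑ l, g⁻¹ k l * (u k * p l) = ∑ k, u k * y k := by
    intro u
    rw [Finset.mul_sum]
    refine Finset.sum_congr rfl fun k _ => ?_
    rw [← hHp k, Finset.mul_sum, Finset.mul_sum, Finset.mul_sum]
    exact Finset.sum_congr rfl fun l _ => by ring
  have S6 : ∑ k, ∑ l, g⁻¹ k l * (m k * p l) = 0 := by
    apply mul_left_cancel₀ hF0
    have : ∑ k, m k * y k = d * ∑ k, p k * y k - F * ∑ k, D k * y k := by
      rw [Finset.mul_sum, Finset.mul_sum, ← Finset.sum_sub_distrib]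
      exact Finset.sum_congr rfl fun k _ => by rw [hm]; ring
    rw [hBp, this, hp, hD]; ring
  have S5 : ∑ k, ∑ l, g⁻¹ k l * (m l * p k) = 0 := by rw [swap, S6]
  have S9 : ∑ k, ∑ l, g⁻¹ k l * (p k * p l) = 1 := by
    apply mul_left_cancel₀ hF0
    rw [hBp, hp]; ring
  have S8 : ∑ k, ∑ l, g⁻¹ k l * g k l = n := by
    have : ∀ k, ∑ l, g⁻¹ k l * g k l = 1 := by
      intro k
      have := hHgkl k k
      simp only [if_true] at this
      rw [← this]
      exact Finset.sum_congr rfl fun l _ => by rw [gsymm]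
    simp [this]
  have S4 : ∑ k, ∑ l, g⁻¹ k l * (m k * g j l) = m j := by
    have : ∀ k, ∑ l, g⁻¹ k l * (m k * g j l) = m k * if k = j then 1 else 0 := by
      intro k
      rw [← hHgkl, Finset.mul_sum]
      exact Finset.sum_congr rfl fun l _ => by rw [gsymm j l]; ring
    simp [this]
  have S3 : ∑ k, ∑ l, g⁻¹ k l * (m l * g j k) = m j := by
    rw [swap m (fun k => g j k), S4]
  have S0 : ∑ k, ∑ l, g⁻¹ k l * (p k * DD j l) = 0 := by
    rw [← swap p (fun l => DD j l)]
    apply mul_left_cancel₀ hF0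
    have h1 := hBp (fun k => DD j k)
    rw [hDD] at h1
    rw [mul_zero, ← h1]
    congr 1
    exact Finset.sum_congr rfl fun k _ => Finset.sum_congr rfl fun l _ => by ring
  have S2 : ∑ k, ∑ l, g⁻¹ k l * (m k * DD j l)
      = - F * ∑ k, ∑ l, g⁻¹ k l * D k * DD l j := by
    have : ∑ k, ∑ l, g⁻¹ k l * (m k * DD j l) = d * (∑ k, ∑ l, g⁻¹ k l * (p k * DD j l))
        - F * ∑ k, ∑ l, g⁻¹ k l * D k * DD l j := by
      simp only [Finset.mul_sum, ← Finset.sum_sub_distrib]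
      refine Finset.sum_congr rfl fun k _ => Finset.sum_congr rfl fun l _ => ?_
      rw [hm, DDsymm l j]; ring
    rw [this, S0]; ring
  have S1 : ∑ k, ∑ l, g⁻¹ k l * (m l * DD j k)
      = - F * ∑ k, ∑ l, g⁻¹ k l * D k * DD l j := by
    rw [swap m (fun k => DD j k), S2]
  have key : 2 * r * F * (∑ k, ∑ l, g⁻¹ k l * C j k l) =
      F^2 / d * (∑ k, ∑ l, g⁻¹ k l * (m l * DD j k))
      + F^2 / d * (∑ k, ∑ l, g⁻¹ k l * (m k * DD j l))
      - (∑ k, ∑ l, g⁻¹ k l * (m l * g j k)) - (∑ k, ∑ l, g⁻¹ k l * (m k * g j l))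
      + p j * (∑ k, ∑ l, g⁻¹ k l * (m l * p k)) + p j * (∑ k, ∑ l, g⁻¹ k l * (m k * p l))
      + m j * (F^2 / d) * (∑ k, ∑ l, g⁻¹ k l * DD k l)
      - m j * (∑ k, ∑ l, g⁻¹ k l * g k l)
      + m j * (∑ k, ∑ l, g⁻¹ k l * (p k * p l)) := by
    simp only [Finset.mul_sum, ← Finset.sum_sub_distrib, ← Finset.sum_add_distrib]
    refine Finset.sum_congr rfl fun k _ => Finset.sum_congr rfl fun l _ => ?_
    linear_combination g⁻¹ k l * hC j k l
  rw [S1, S2, S3, S4, S5, S6, S8, S9, hm j] at key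
  generalize (∑ k, ∑ l, g⁻¹ k l * C j k l) = I at *
  generalize (∑ k, ∑ l, g⁻¹ k l * DD k l) = t at *
  generalize (∑ k, ∑ l, g⁻¹ k l * D k * DD l j) = X at *
  have hr : r = F - d := by linarith
  subst hr
  apply mul_left_cancel₀ hF0
  field_simp at key ⊢
  linear_combination key

/-! ### Positivity of `F` and the identity -/

/-- If all eigenvalues of the symmetric operator `A` are below `1`, its quadratic form is strictly
below the Euclidean one away from the origin. -/
lemma quad_lt {n : ℕ} (A : EuclideanSpace ℝ (Fin n) →ₗ[ℝ] EuclideanSpace ℝ (Fin n))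
    (hA : ∀ u v, ⟪A u, v⟫ = ⟪A v, u⟫)
    (heig : ∀ μ : ℝ, Module.End.HasEigenvalue A μ → μ < 1)
    (y : EuclideanSpace ℝ (Fin n)) (hy : y ≠ 0) : ⟪A y, y⟫ < ‖y‖ ^ 2 := by
  have hs : A.IsSymmetric := fun u v => by rw [hA u v, real_inner_comm]
  have hn : Module.finrank ℝ (EuclideanSpace ℝ (Fin n)) = n := by simp
  let b := hs.eigenvectorBasis hn
  -- Diagonalize: in an orthonormal eigenbasis both forms are weighted sums of squares.
  have h1 : ⟪A y, y⟫ = ∑ i, hs.eigenvalues hn i * ⟪b i, y⟫ ^ 2 := by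
    rw [← b.sum_inner_mul_inner]
    refine Finset.sum_congr rfl fun i _ => ?_
    rw [hs y (b i), hs.apply_eigenvectorBasis hn i, inner_smul_right, real_inner_comm]
    simp [b]; ring
  have h2 : ‖y‖ ^ 2 = ∑ i, ⟪b i, y⟫ ^ 2 := by
    rw [← real_inner_self_eq_norm_sq, ← b.sum_inner_mul_inner]
    refine Finset.sum_congr rfl fun i _ => ?_
    rw [real_inner_comm]; ring
  have hlt : ∀ i, hs.eigenvalues hn i < 1 := fun i => heig _ (hs.hasEigenvalue_eigenvalues hn i)
  have hex : ∃ i, ⟪b i, y⟫ ≠ 0 := by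
    by_contra! h
    apply hy
    have : ‖y‖ ^ 2 = 0 := by rw [h2]; simp [h]
    simpa using this
  obtain ⟨i, hi⟩ := hex
  rw [h1, h2]
  refine Finset.sum_lt_sum (fun i _ => ?_) ⟨i, Finset.mem_univ _, ?_⟩
  · nlinarith [sq_nonneg ⟪b i, y⟫, hlt i]
  · have : 0 < ⟪b i, y⟫ ^ 2 := by positivity
    nlinarith [hlt i]

/-- For a bipartite Finsler norm `F = ρ + Δ` on ℝⁿ and `y` off the slit
with `(g_{jk}(y))` invertible, the mean Cartan torsion `I_j = g^{kl} C_{jkl}` satisfies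
`2(F - Δ) I_j + κ ((Δ/F) p_j - Δ_j) + (2F²/Δ) g^{kl} Δ_k Δ_{lj} = 0`, where
`κ = n + 1 - (F²/Δ) g^{kl} Δ_{kl}`. -/
theorem stmt11 {n : ℕ}
    (s : EuclideanSpace ℝ (Fin n) →ₗ[ℝ] EuclideanSpace ℝ (Fin n) →ₗ[ℝ] ℝ)
    (hsymm : ∀ u v, s u v = s v u)
    (hpsd : ∀ y, 0 ≤ s y y)
    (stilde : EuclideanSpace ℝ (Fin n) →ₗ[ℝ] EuclideanSpace ℝ (Fin n))
    (hst : ∀ u v, s u v = ⟪stilde u, v⟫)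
    (heig : ∀ μ : ℝ, Module.End.HasEigenvalue stilde μ → μ < 1)
    (Δ : EuclideanSpace ℝ (Fin n) → ℝ)
    (hΔ : (∀ z, Δ z = Real.sqrt (s z z)) ∨ (∀ z, Δ z = -Real.sqrt (s z z)))
    (F : EuclideanSpace ℝ (Fin n) → ℝ)
    (hF : ∀ z, F z = ‖z‖ + Δ z)
    (y : EuclideanSpace ℝ (Fin n)) (hy : s y y ≠ 0)
    (g : Matrix (Fin n) (Fin n) ℝ)
    (hg : ∀ j k, g j k = (1/2 : ℝ) * pd (pd (fun z => (F z)^2) j) k y)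
    (hginv : IsUnit g.det)
    (j : Fin n) :
    2 * (F y - Δ y) *
        (∑ k, ∑ l, g⁻¹ k l * ((1/4 : ℝ) * pd (pd (pd (fun z => (F z)^2) j) k) l y))
      + ((n : ℝ) + 1 - ((F y)^2 / Δ y) * ∑ k, ∑ l, g⁻¹ k l * pd (pd Δ k) l y) *
          ((Δ y / F y) * pd F j y - pd Δ j y)
      + (2 * (F y)^2 / Δ y) * ∑ k, ∑ l, g⁻¹ k l * pd Δ k y * pd (pd Δ l) j y = 0 := by
  have hA : ∀ u v, ⟪stilde u, v⟫ = ⟪stilde v, u⟫ := fun u v => by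
    rw [← hst, ← hst, hsymm]
  have hq : ∀ z, s z z = ⟪stilde z, z⟫ := fun z => hst z z
  let U : Set (EuclideanSpace ℝ (Fin n)) := {z | s z z ≠ 0}
  have hsm : ContDiff ℝ ((⊤ : ℕ∞) : WithTop ℕ∞) (fun z => s z z) := by
    simp only [hq]
    exact (LinearMap.toContinuousLinearMap stilde).contDiff.inner ℝ contDiff_id
  have hU : IsOpen U := isOpen_ne_fun hsm.continuous continuous_const
  have hΔs : ∀ z ∈ U, ContDiffAt ℝ ((⊤ : ℕ∞) : WithTop ℕ∞) Δ z := by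
    intro z hz
    have h1 : ContDiffAt ℝ ((⊤ : ℕ∞) : WithTop ℕ∞) (fun z => Real.sqrt (s z z)) z := hsm.contDiffAt.sqrt hz
    rcases hΔ with h | h
    · rw [funext h]; exact h1
    · rw [funext h]; exact h1.neg
  have hz0 : ∀ z ∈ U, z ≠ 0 := by
    rintro z hz rfl
    exact hz (by simp)
  -- Naming the norm keeps it on the same footing as `Δ`.
  obtain ⟨ρ, hρ⟩ : ∃ ρ : EuclideanSpace ℝ (Fin n) → ℝ, ∀ z, ρ z = ‖z‖ := ⟨_, fun _ => rfl⟩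
  have hρs : ∀ z ∈ U, ContDiffAt ℝ ((⊤ : ℕ∞) : WithTop ℕ∞) ρ z := by
    intro z hz
    rw [funext hρ]; exact contDiffAt_norm ℝ (hz0 z hz)
  have hF' : ∀ z, F z = ρ z + Δ z := fun z => by rw [hF, hρ]
  have hFs : ∀ z ∈ U, ContDiffAt ℝ ((⊤ : ℕ∞) : WithTop ℕ∞) F z := by
    intro z hz
    rw [funext hF']; exact (hρs z hz).add (hΔs z hz)
  have hΔsq : ∀ z, Δ z ^ 2 = s z z := by
    intro z
    rcases hΔ with h | h <;> simp [h, Real.sq_sqrt (hpsd z)]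
  have hyU : y ∈ U := hy
  have hd : Δ y ≠ 0 := fun h => hy (by rw [← hΔsq, h]; simp)
  have hr : ρ y ≠ 0 := by
    rw [hρ]; exact norm_ne_zero_iff.2 (hz0 y hyU)
  -- `F y = 0` would force `s y y = Δ² = ‖y‖²`, against the eigenvalue bound.
  have hF0 : F y ≠ 0 := by
    intro h
    have h1 := quad_lt stilde hA heig y (hz0 y hyU)
    rw [← hq, ← hΔsq] at h1
    rw [hF] at h
    have : Δ y = -‖y‖ := by linarith
    rw [this] at h1
    simp at h1
  obtain ⟨Ds, D3, De, Dee⟩ := sqrt_relations hU hΔs stilde hA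
    (fun z => by rw [hΔsq, hq]) y hyU hd
  obtain ⟨Rs, R3, Re, Ree⟩ := sqrt_relations hU hρs LinearMap.id
    (fun u v => by simp only [LinearMap.id_apply, real_inner_comm])
    (fun z => by simp only [hρ, LinearMap.id_apply, real_inner_self_eq_norm_sq]) y hyU hr
  have F1 : ∀ i, ∀ z ∈ U, pd F i z = pd ρ i z + pd Δ i z := by
    intro i z hz
    rw [funext hF']
    exact pd_add (diffAt_of_smooth (hρs z hz)) (diffAt_of_smooth (hΔs z hz)) i
  have F2 : ∀ i k, ∀ z ∈ U, pd (pd F i) k z = pd (pd ρ i) k z + pd (pd Δ i) k z := by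
    intro i k z hz
    rw [pd_congr hU (F1 i) k z hz]
    exact pd_add (diffAt_of_smooth (pd_smooth hρs i z hz))
      (diffAt_of_smooth (pd_smooth hΔs i z hz)) k
  have F3 : ∀ i k l, ∀ z ∈ U, pd (pd (pd F i) k) l z =
      pd (pd (pd ρ i) k) l z + pd (pd (pd Δ i) k) l z := by
    intro i k l z hz
    rw [pd_congr hU (F2 i k) l z hz]
    exact pd_add (diffAt_of_smooth (pd_smooth (pd_smooth hρs i) k z hz))
      (diffAt_of_smooth (pd_smooth (pd_smooth hΔs i) k z hz)) l
  have hFy : F y = ρ y + Δ y := hF' y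
  have hg' : ∀ i k, g i k = pd F i y * pd F k y
      + F y * (pd (pd ρ i) k y + pd (pd Δ i) k y) := by
    intro i k
    rw [hg, (pd_sq hU hFs i k i y hyU).2.1, F2 i k y hyU]; ring
  have hp : ∑ k, pd F k y * y k = F y := by
    simp only [F1 _ y hyU, add_mul, Finset.sum_add_distrib, Re, De, hFy]
  refine contraction (F y) (ρ y) (Δ y) hd hFy hF0 (fun k => pd F k y) (fun k => pd Δ k y)
    (fun k => Δ y * pd F k y - F y * pd Δ k y) (fun k => y k) (fun k l => pd (pd Δ k) l y)
    g hginv ?_ Ds (fun _ => rfl) hp De Dee ?_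
    (fun j k l => 1/4 * pd (pd (pd (fun z => (F z)^2) j) k) l y) ?_ j
  · intro k l
    rw [hg', hg', Rs k l, Ds k l]; ring
  · intro i
    have : ∀ k, g i k * y k = pd F i y * (pd F k y * y k)
        + F y * (pd (pd ρ i) k y * y k) + F y * (pd (pd Δ i) k y * y k) := by
      intro k; rw [hg']; ring
    simp only [this, Finset.sum_add_distrib, ← Finset.mul_sum, hp, Ree, Dee]
    ring
  · intro j k l
    -- The third derivatives of `ρ` and `Δ` are eliminated by their cyclic relations.
    have hR := R3 j k l
    have hD := D3 j k l
    simp only [(pd_sq hU hFs j k l y hyU).2.2, hg', F1 _ y hyU, F2 _ _ y hyU, F3 _ _ _ y hyU, hFy]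
    field_simp
    linear_combination 4 * (ρ y + Δ y)^2 * Δ y * hR + 4 * (ρ y + Δ y)^2 * ρ y * hD
end

section
/- Let F = ρ + Δ be a b-space Finsler norm on ℝ^n and let y ∈ ℝ^n ∖ ℝb be a point at which the matrix (g_{jk}(y)) is invertible. Then for every index j: g^{kl} Δ_k Δ_{lj} = 0 (repeated indices k, l summed). -/
/-!
Write `p = P y`, `r = ‖p‖`, `ρ = ‖y‖`, and `Δ = c‖P ·‖` with `c = ±‖b‖`. Then `dΔ = (c / r) p`, and
the Hessian of `Δ` is `H = (c / r) Q`, where `Q = 1 - b bᵀ / ‖b‖² - p pᵀ / r²` is the orthogonal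
projection onto the complement of `span {b, p}`. In `g = dF dFᵀ + F (Hess ρ + H)` with
`Hess ρ = (1 - y yᵀ / ρ²) / ρ`, both `dF` and `y` lie in `span {b, p}`, which `H` annihilates, so
`g H = κ H` with `κ = F (1 / ρ + c / r)`. If `κ ≠ 0` then `g⁻¹ H = κ⁻¹ H`; if `κ = 0` then
invertibility of `g` forces `H = 0`. Either way `dΔᵀ g⁻¹ H` is a multiple of `pᵀ H = 0`
(or zero outright).

The derivatives are computed once for `z ↦ ‖A z‖` with `A` a continuous linear map, and used for
`A = P` and `A = id`. The linear algebra is `contract_inv_eq_zero`.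
-/

open scoped RealInnerProductSpace

section Derivatives

/-! ### Derivatives of `‖A z‖` and of `F²` -/

variable {n : ℕ}

lemma pd_congr_s17 {f h : EuclideanSpace ℝ (Fin n) → ℝ} {y : EuclideanSpace ℝ (Fin n)}
    (hfh : f =ᶠ[nhds y] h) (j : Fin n) : pd f j y = pd h j y := by
  simp only [pd, hfh.fderiv_eq]

lemma hasFDerivAt_norm_clm (A : EuclideanSpace ℝ (Fin n) →L[ℝ] EuclideanSpace ℝ (Fin n))
    {y : EuclideanSpace ℝ (Fin n)} (hy : A y ≠ 0) :
    HasFDerivAt (fun z => ‖A z‖) (‖A y‖⁻¹ • (innerSL ℝ (A y)).comp A) y := by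
  have h1 : HasFDerivAt (fun z => ‖A z‖ ^ 2) _ y := (A.hasFDerivAt (x := y)).norm_sq
  have hne : ‖A y‖ ≠ 0 := norm_ne_zero_iff.mpr hy
  have h2 := h1.sqrt (pow_ne_zero 2 hne)
  simp only [Real.sqrt_sq (norm_nonneg _)] at h2
  refine h2.congr_fderiv ?_
  ext v
  simp
  field_simp

lemma pd_norm_clm (A : EuclideanSpace ℝ (Fin n) →L[ℝ] EuclideanSpace ℝ (Fin n))
    {y : EuclideanSpace ℝ (Fin n)} (hy : A y ≠ 0) (j : Fin n) :
    pd (fun z => ‖A z‖) j y = ‖A y‖⁻¹ * ⟪A y, A (EuclideanSpace.single j 1)⟫ := by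
  simp [pd, (hasFDerivAt_norm_clm A hy).fderiv]

lemma eventually_clm_ne (A : EuclideanSpace ℝ (Fin n) →L[ℝ] EuclideanSpace ℝ (Fin n))
    {y : EuclideanSpace ℝ (Fin n)} (hy : A y ≠ 0) : ∀ᶠ z in nhds y, A z ≠ 0 :=
  A.continuous.continuousAt.eventually_ne hy

lemma hasFDerivAt_pd_norm_clm (A : EuclideanSpace ℝ (Fin n) →L[ℝ] EuclideanSpace ℝ (Fin n))
    {y : EuclideanSpace ℝ (Fin n)} (hy : A y ≠ 0) (j : Fin n) :
    HasFDerivAt (pd (fun z => ‖A z‖) j)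
      (‖A y‖⁻¹ • (innerSL ℝ (A (EuclideanSpace.single j 1))).comp A
        - (⟪A y, A (EuclideanSpace.single j 1)⟫ / ‖A y‖ ^ 3) • (innerSL ℝ (A y)).comp A) y := by
  have hne : ‖A y‖ ≠ 0 := norm_ne_zero_iff.mpr hy
  have h1 := (hasDerivAt_inv hne).comp_hasFDerivAt y (hasFDerivAt_norm_clm A hy)
  have h2 := ((innerSL ℝ (A (EuclideanSpace.single j 1))).comp A).hasFDerivAt (x := y)
  have h3 := h1.mul h2
  refine (h3.congr_of_eventuallyEq ?_).congr_fderiv ?_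
  · filter_upwards [eventually_clm_ne A hy] with z hz
    simp [pd_norm_clm A hz, real_inner_comm]
  · ext v
    simp [real_inner_comm]
    field_simp
    ring

lemma pd_pd_norm_clm (A : EuclideanSpace ℝ (Fin n) →L[ℝ] EuclideanSpace ℝ (Fin n))
    {y : EuclideanSpace ℝ (Fin n)} (hy : A y ≠ 0) (j k : Fin n) :
    pd (pd (fun z => ‖A z‖) j) k y =
      ‖A y‖⁻¹ * ⟪A (EuclideanSpace.single j 1), A (EuclideanSpace.single k 1)⟫
        - ⟪A y, A (EuclideanSpace.single j 1)⟫ / ‖A y‖ ^ 3 *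
          ⟪A y, A (EuclideanSpace.single k 1)⟫ := by
  rw [pd, (hasFDerivAt_pd_norm_clm A hy j).fderiv]
  simp

lemma inner_single_one (z : EuclideanSpace ℝ (Fin n)) (j : Fin n) :
    ⟪z, EuclideanSpace.single j (1 : ℝ)⟫ = z j := by
  simp [EuclideanSpace.inner_single_right]

/-- The Hessian of `F²` is `2 (dF dFᵀ + F Hess F)`. -/
lemma pd_pd_sq {F : EuclideanSpace ℝ (Fin n) → ℝ} {y : EuclideanSpace ℝ (Fin n)} (j k : Fin n)
    (h1 : ∀ᶠ z in nhds y, DifferentiableAt ℝ F z) (h2 : DifferentiableAt ℝ (pd F j) y) :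
    pd (pd (fun z => (F z) ^ 2) j) k y = 2 * (pd F j y * pd F k y + F y * pd (pd F j) k y) := by
  have e : pd (fun z => (F z) ^ 2) j =ᶠ[nhds y] fun z => 2 * (F z * pd F j z) := by
    filter_upwards [h1] with z hz
    simp [pd, (hz.hasFDerivAt.pow 2).fderiv]
    ring
  have h3 := (h1.self_of_nhds.hasFDerivAt.fun_mul h2.hasFDerivAt).const_mul 2
  rw [pd_congr_s17 e, pd, HasFDerivAt.fderiv h3]
  simp [pd]
  ring

/-- The orthogonal projection onto `b^⊥`, as a continuous linear map (the identity if `b = 0`). -/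
noncomputable def projPerp (b : EuclideanSpace ℝ (Fin n)) :
    EuclideanSpace ℝ (Fin n) →L[ℝ] EuclideanSpace ℝ (Fin n) :=
  ContinuousLinearMap.id ℝ _ - ((‖b‖ ^ 2)⁻¹ • innerSL ℝ b).smulRight b

lemma projPerp_apply (b z : EuclideanSpace ℝ (Fin n)) :
    projPerp b z = z - (⟪b, z⟫ / ‖b‖ ^ 2) • b := by
  simp [projPerp, div_eq_inv_mul]

lemma inner_projPerp {b : EuclideanSpace ℝ (Fin n)} (hb : 0 < ‖b‖)
    (z : EuclideanSpace ℝ (Fin n)) : ⟪b, projPerp b z⟫ = 0 := by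
  rw [projPerp_apply, inner_sub_right, inner_smul_right, real_inner_self_eq_norm_sq]
  field_simp
  ring

/-- `P` is symmetric and idempotent. -/
lemma inner_projPerp_projPerp {b : EuclideanSpace ℝ (Fin n)} (hb : 0 < ‖b‖)
    (z w : EuclideanSpace ℝ (Fin n)) : ⟪projPerp b z, projPerp b w⟫ = ⟪projPerp b z, w⟫ := by
  rw [projPerp_apply b w, inner_sub_right, inner_smul_right, real_inner_comm,
    real_inner_comm b, inner_projPerp hb]
  simp

end Derivatives

section LinearAlgebra

/-! ### Eigenspace argument for `g` -/

open Matrix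

/-- No sign or nonvanishing of `κ` is needed: `κ = 0` forces `H = 0`. -/
lemma contract_inv_eq_zero {n : ℕ} {g H : Matrix (Fin n) (Fin n) ℝ} {d : Fin n → ℝ} {κ : ℝ}
    (hg : IsUnit g.det) (hgH : g * H = κ • H) (hd : d ᵥ* H = 0) : d ᵥ* (g⁻¹ * H) = 0 := by
  have h1 : H = κ • (g⁻¹ * H) := by
    rw [← Matrix.mul_smul, ← hgH, ← Matrix.mul_assoc, Matrix.nonsing_inv_mul g hg, Matrix.one_mul]
  rcases eq_or_ne κ 0 with rfl | hκ
  · rw [h1]; simp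
  · have h2 : g⁻¹ * H = κ⁻¹ • H := by
      conv_rhs => rw [h1]
      rw [smul_smul, inv_mul_cancel₀ hκ, one_smul]
    rw [h2, Matrix.vecMul_smul, hd, smul_zero]

/-- For orthogonal `b, p`, the projection `1 - b bᵀ / |b|² - p pᵀ / |p|²` annihilates `b`. -/
lemma vecMul_proj_eq_zero {n : ℕ} {b p : Fin n → ℝ} {β γ : ℝ} (hβ : β ≠ 0)
    (hb : b ⬝ᵥ b = β) (hbp : b ⬝ᵥ p = 0) :
    b ᵥ* (1 - β⁻¹ • vecMulVec b b - γ⁻¹ • vecMulVec p p) = 0 := by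
  simp [Matrix.vecMul_sub, Matrix.vecMul_smul, Matrix.vecMul_vecMulVec, hb, hbp, smul_smul, hβ]

/-- The computation `g H = κ H` for `g = f fᵀ + F (Hess ρ + c Q)` and `H = c Q`: the vectors `f` and
`y` are combinations of `b` and `p`, hence annihilated by `Q`. -/
lemma metric_mul_hess {n : ℕ} {b p y f : Fin n → ℝ} {β γ t s s' c F ρ : ℝ}
    {Q g : Matrix (Fin n) (Fin n) ℝ}
    (hQ : Q = 1 - β⁻¹ • vecMulVec b b - γ⁻¹ • vecMulVec p p)
    (hbQ : b ᵥ* Q = 0) (hpQ : p ᵥ* Q = 0)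
    (hy : y = p + t • b) (hf : f = s • y + s' • p)
    (hg : g = vecMulVec f f + F • (ρ⁻¹ • (1 : Matrix (Fin n) (Fin n) ℝ)
      - (ρ ^ 3)⁻¹ • vecMulVec y y + c • Q)) :
    g * (c • Q) = (F * (ρ⁻¹ + c)) • (c • Q) := by
  have hyQ : y ᵥ* Q = 0 := by
    rw [hy, Matrix.add_vecMul, Matrix.smul_vecMul, hbQ, hpQ]; simp
  have hfQ : f ᵥ* Q = 0 := by
    rw [hf, Matrix.add_vecMul, Matrix.smul_vecMul, Matrix.smul_vecMul, hyQ, hpQ]; simp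
  have hQQ : Q * Q = Q := by
    nth_rewrite 1 [hQ]
    simp [Matrix.sub_mul, Matrix.vecMulVec_mul, hbQ, hpQ]
  rw [hg]
  simp only [Matrix.add_mul, Matrix.sub_mul, Matrix.smul_mul, Matrix.mul_smul,
    Matrix.vecMulVec_mul, hyQ, hfQ, hQQ, Matrix.one_mul, Matrix.vecMulVec_zero]
  module

end LinearAlgebra

/-- For a b-space Finsler norm `F = ρ + Δ` on ℝⁿ at `y ∉ ℝb` where
`(g_{jk}(y))` is invertible, `g^{kl} Δ_k Δ_{lj} = 0` for every `j`. -/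
theorem stmt17 {n : ℕ} (hn : 2 ≤ n)
    (b : EuclideanSpace ℝ (Fin n)) (hb0 : 0 < ‖b‖) (hb1 : ‖b‖ < 1)
    (Δ : EuclideanSpace ℝ (Fin n) → ℝ)
    (hΔ : (∀ z, Δ z = ‖b‖ * ‖z - (⟪b, z⟫ / ‖b‖^2) • b‖) ∨
          (∀ z, Δ z = -(‖b‖ * ‖z - (⟪b, z⟫ / ‖b‖^2) • b‖)))
    (F : EuclideanSpace ℝ (Fin n) → ℝ)
    (hF : ∀ z, F z = ‖z‖ + Δ z)
    (y : EuclideanSpace ℝ (Fin n))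
    (hy : y ∉ Submodule.span ℝ ({b} : Set (EuclideanSpace ℝ (Fin n))))
    (g : Matrix (Fin n) (Fin n) ℝ)
    (hg : ∀ j k, g j k = (1/2 : ℝ) * pd (pd (fun z => (F z)^2) j) k y)
    (hginv : IsUnit g.det) :
    ∀ j, ∑ k, ∑ l, g⁻¹ k l * pd Δ k y * pd (pd Δ l) j y = 0 := by
  classical
  set P := projPerp b with hP
  obtain ⟨c, hc⟩ : ∃ c : ℝ, Δ = fun z => c * ‖P z‖ := by
    rcases hΔ with h | h
    · exact ⟨‖b‖, funext fun z => by rw [h, hP, projPerp_apply]⟩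
    · exact ⟨-‖b‖, funext fun z => by rw [h, hP, projPerp_apply]; ring⟩
  have hp0 : P y ≠ 0 := by
    intro h
    rw [hP, projPerp_apply, sub_eq_zero] at h
    exact hy (Submodule.mem_span_singleton.mpr ⟨_, h.symm⟩)
  have hy0 : ContinuousLinearMap.id ℝ _ y ≠ 0 := by
    rintro h
    exact hy (by rw [show y = 0 from h]; exact Submodule.zero_mem _)
  have hr : ‖P y‖ ≠ 0 := norm_ne_zero_iff.mpr hp0
  have hFe : F = fun z => ‖ContinuousLinearMap.id ℝ (EuclideanSpace ℝ (Fin n)) z‖ + c * ‖P z‖ := by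
    funext z; rw [hF, hc]; rfl
  have hPe : ∀ z j, ⟪P z, P (EuclideanSpace.single j 1)⟫ = P z j := by
    intro z j
    rw [hP, inner_projPerp_projPerp hb0, inner_single_one]
  have hyp := eventually_clm_ne P hp0
  have hyi := eventually_clm_ne _ hy0
  have dΔ : ∀ z, P z ≠ 0 → ∀ j, pd Δ j z = c * pd (fun z => ‖P z‖) j z := by
    intro z hz j
    rw [hc, pd, ((hasFDerivAt_norm_clm P hz).const_mul c).fderiv, pd,
      (hasFDerivAt_norm_clm P hz).fderiv]
    simp
  have ddΔ : ∀ j k, pd (pd Δ j) k y = c * pd (pd (fun z => ‖P z‖) j) k y := by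
    intro j k
    rw [pd_congr_s17 (hyp.mono fun z hz => dΔ z hz j), pd,
      ((hasFDerivAt_pd_norm_clm P hp0 j).const_mul c).fderiv, pd,
      (hasFDerivAt_pd_norm_clm P hp0 j).fderiv]
    simp
  have hFd : ∀ᶠ z in nhds y, DifferentiableAt ℝ F z := by
    filter_upwards [hyp, hyi] with z hz hz'
    rw [hFe]
    exact ((hasFDerivAt_norm_clm _ hz').fun_add
      ((hasFDerivAt_norm_clm P hz).const_mul c)).differentiableAt
  have dF : ∀ j, pd F j =ᶠ[nhds y] fun z =>
      pd (fun z => ‖ContinuousLinearMap.id ℝ (EuclideanSpace ℝ (Fin n)) z‖) j z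
        + c * pd (fun z => ‖P z‖) j z := by
    intro j
    filter_upwards [hyp, hyi] with z hz hz'
    have h := (hasFDerivAt_norm_clm _ hz').fun_add ((hasFDerivAt_norm_clm P hz).const_mul c)
    rw [hFe, pd, HasFDerivAt.fderiv h, pd, pd,
      (hasFDerivAt_norm_clm P hz).fderiv, (hasFDerivAt_norm_clm _ hz').fderiv]
    simp
  have hFdd := fun j => ((hasFDerivAt_pd_norm_clm _ hy0 j).fun_add
      ((hasFDerivAt_pd_norm_clm P hp0 j).const_mul c))
  have ddF : ∀ j k, pd (pd F j) k y =
      pd (pd (fun z => ‖ContinuousLinearMap.id ℝ (EuclideanSpace ℝ (Fin n)) z‖) j) k y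
        + c * pd (pd (fun z => ‖P z‖) j) k y := by
    intro j k
    rw [pd_congr_s17 (dF j), pd, HasFDerivAt.fderiv (hFdd j), pd, pd,
      (hasFDerivAt_pd_norm_clm P hp0 j).fderiv, (hasFDerivAt_pd_norm_clm _ hy0 j).fderiv]
    simp
  have hgF : ∀ j k, g j k = pd F j y * pd F k y + F y * pd (pd F j) k y := by
    intro j k
    rw [hg, pd_pd_sq j k hFd ((hFdd j).differentiableAt.congr_of_eventuallyEq (dF j))]
    ring
  set B : Fin n → ℝ := fun i => b i with hB
  set p : Fin n → ℝ := fun i => P y i with hpdef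
  set Y : Fin n → ℝ := fun i => y i with hY
  set Q : Matrix (Fin n) (Fin n) ℝ := 1 - (‖b‖ ^ 2)⁻¹ • Matrix.vecMulVec B B
    - (‖P y‖ ^ 2)⁻¹ • Matrix.vecMulVec p p with hQ
  have dot : ∀ u v : EuclideanSpace ℝ (Fin n),
      (fun i => u i) ⬝ᵥ (fun i => v i) = ⟪u, v⟫ := by
    intro u v
    simp [PiLp.inner_apply, dotProduct, mul_comm]
  have hbb : B ⬝ᵥ B = ‖b‖ ^ 2 := by rw [hB, dot, real_inner_self_eq_norm_sq]
  have hpp : p ⬝ᵥ p = ‖P y‖ ^ 2 := by rw [hpdef, dot, real_inner_self_eq_norm_sq]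
  have hbp : B ⬝ᵥ p = 0 := by rw [hpdef, hB, dot, hP, inner_projPerp hb0]
  have hbQ : Matrix.vecMul B Q = 0 := vecMul_proj_eq_zero (pow_ne_zero 2 hb0.ne') hbb hbp
  have hpQ : Matrix.vecMul p Q = 0 := by
    rw [hQ, sub_right_comm]
    exact vecMul_proj_eq_zero (pow_ne_zero 2 hr) hpp (by rw [dotProduct_comm, hbp])
  have hYp : Y = p + (⟪b, y⟫ / ‖b‖ ^ 2) • B := by
    funext i
    simp [hY, hpdef, hB, hP, projPerp_apply]
  have hone : ∀ j k : Fin n, ⟪(EuclideanSpace.single j 1 : EuclideanSpace ℝ (Fin n)),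
      EuclideanSpace.single k 1⟫ = (1 : Matrix (Fin n) (Fin n) ℝ) j k := by
    intro j k
    rw [inner_single_one]
    simp [Matrix.one_apply, eq_comm]
  have hPone : ∀ j k : Fin n, P (EuclideanSpace.single j 1) k =
      (1 : Matrix (Fin n) (Fin n) ℝ) j k - (‖b‖ ^ 2)⁻¹ * (b j * b k) := by
    intro j k
    rw [hP, projPerp_apply, inner_single_one]
    simp [Matrix.one_apply, eq_comm]
    ring
  have hHess : ∀ j k, pd (pd Δ j) k y = ((c * ‖P y‖⁻¹) • Q) j k := by
    intro j k
    rw [ddΔ, pd_pd_norm_clm P hp0, hPe, hPe, hPe, hPone]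
    simp [hQ, Matrix.vecMulVec_apply, hB, hpdef]
    field_simp
  have hgrad : ∀ j, pd Δ j y = ((c * ‖P y‖⁻¹) • p) j := by
    intro j
    rw [dΔ y hp0, pd_norm_clm P hp0, hPe]
    simp [hpdef]
    ring
  have hFgrad : ∀ j, pd F j y = (‖y‖⁻¹ • Y + (c * ‖P y‖⁻¹) • p) j := by
    intro j
    rw [(dF j).self_of_nhds]
    beta_reduce
    rw [← dΔ y hp0, hgrad, pd_norm_clm _ hy0]
    simp [hY, inner_single_one]
  have hgm : g = Matrix.vecMulVec (‖y‖⁻¹ • Y + (c * ‖P y‖⁻¹) • p)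
      (‖y‖⁻¹ • Y + (c * ‖P y‖⁻¹) • p)
      + F y • (‖y‖⁻¹ • (1 : Matrix (Fin n) (Fin n) ℝ)
      - (‖y‖ ^ 3)⁻¹ • Matrix.vecMulVec Y Y + (c * ‖P y‖⁻¹) • Q) := by
    ext j k
    rw [hgF, ddF, ← ddΔ, hHess, hFgrad, hFgrad, pd_pd_norm_clm _ hy0]
    simp only [Matrix.add_apply, ContinuousLinearMap.id_apply, hone, Matrix.sub_apply, Matrix.smul_apply,
      Matrix.vecMulVec_apply, smul_eq_mul, hY]
    simp only [inner_single_one]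
    ring
  -- `g H = κ H` with `H = (c / r) Q` and `κ = F (1 / ρ + c / r)`
  have hgH := metric_mul_hess hQ hbQ hpQ hYp rfl hgm
  have hdH : Matrix.vecMul ((c * ‖P y‖⁻¹) • p) ((c * ‖P y‖⁻¹) • Q) = 0 := by
    rw [Matrix.smul_vecMul, Matrix.vecMul_smul, hpQ, smul_zero, smul_zero]
  intro j
  have hfin := congrFun (contract_inv_eq_zero hginv hgH hdH) j
  rw [Pi.zero_apply] at hfin
  rw [← hfin]
  simp only [hHess, hgrad, Matrix.vecMul, dotProduct, Matrix.mul_apply, Finset.mul_sum]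
  refine Finset.sum_congr rfl fun k _ => Finset.sum_congr rfl fun l _ => ?_
  ring
end
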